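/- Let p(β) = e^{-βE₀}/(e^{-βE₀}+e^{-βE₁}) and q(β) = 1 − p(β), with E₁ = E₀ + Δ, Δ > 0. For two pure states families with overlaps F₀⁺(δ) = 1 − χ₀⁺ δ²/2 + o(δ²) and F₀⁻(δ) = 1 − χ₀⁻ δ²/2 + o(δ²), and gap function Δ(δ) differentiable at 0 with Δ(0)=Δ, the function F(δ) = F₀⁺(δ)/sqrt((1+e^{-βΔ(0)})(1+e^{-βΔ(δ)})) · (stuff)... Specifically: F(δ) = F₀⁺(δ)/[sqrt(1+e^{-βΔ})sqrt(1+e^{-βΔ(δ)})] + F₀⁻(δ)/[sqrt(1+e^{βΔ})sqrt(1+e^{βΔ(δ)})] satisfies F(0) = 1 and −F''(0) = χ₀⁺/(1+e^{-βΔ}) + χ₀⁻/(1+e^{βΔ}) + (β²Δ'(0)²/16)·[ (e^{βΔ}(8 e^{βΔ} − 4))/( (e^{βΔ}+1)³ ) + (e^{-βΔ}(8 e^{-βΔ} −4))/((e^{-βΔ}+1)³) ]·... equivalently, −F''(0) = χ₀⁺/(1+e^{-βΔ}) + χ₀⁻/(1+e^{βΔ}) + R where R = β²Δ'(0)² [ e^{βΔ}/(2(e^{βΔ}+1)²)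 − 3e^{βΔ}/(4(e^{βΔ}+1)³) + e^{-βΔ}/(2(e^{-βΔ}+1)²) − 3e^{-βΔ}/(4(e^{-βΔ}+1)³) ]. -/

import Mathlib

open Real

/-!
With `p = σ(βΔ(δ))` and `q = σ(-βΔ(δ))` the occupation probabilities of the two levels, where `σ`
is the logistic function, `F(δ) = F₀⁺(δ) √p(0) √p(δ) + F₀⁻(δ) √q(0) √q(δ)`. More generally,
let `ψᵢ` be amplitudes with `∑ ψᵢ² = 1`, so that `∑ ψᵢψᵢ' = 0`. Then
`∑ fᵢ ψᵢ(a) ψᵢ` has derivative `∑ fᵢ' ψᵢ(a) ψᵢ + ∑ (fᵢ ψᵢ(a) - ψᵢ) ψᵢ'`, and if `fᵢ(a) = 1` and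
`fᵢ'(a) = 0`, every summand is the product of a function vanishing at `a` and a continuous one.
Such a product is differentiated without differentiating the second factor, which is why no second
derivative of the amplitudes, and hence none of the gap, appears. For `ψᵢ = √pᵢ` the second
derivative is `∑ fᵢ''(a) pᵢ(a)` minus a quarter of the Fisher information `∑ pᵢ'² / pᵢ`.
-/

open scoped Topology

section Calculus

variable {𝕜 : Type*} [NontriviallyNormedField 𝕜]

theorem hasDerivAt_mul_of_eq_zero_of_continuousAt {𝔸 : Type*} [NormedRing 𝔸] [NormedAlgebra 𝕜 𝔸]
    {u v : 𝕜 → 𝔸} {u' : 𝔸} {a : 𝕜} (hu : HasDerivAt u u' a) (hu₀ : u a = 0)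
    (hv : ContinuousAt v a) : HasDerivAt (fun x ↦ u x * v x) (u' * v a) a := by
  rw [hasDerivAt_iff_tendsto_slope] at hu ⊢
  have slope_mul : slope (fun x ↦ u x * v x) a = fun x ↦ slope u a x * v x := by
    ext x
    simp [slope, hu₀]
  rw [slope_mul]
  exact hu.mul (hv.mono_left nhdsWithin_le_nhds)

variable {E : Type*} [NormedAddCommGroup E] [NormedSpace 𝕜 E] {f f' : 𝕜 → E} {f'' : E} {a : 𝕜}

theorem eventually_hasDerivAt_of_contDiffAt_one (hf : ContDiffAt 𝕜 1 f a) :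
    ∀ᶠ x in 𝓝 a, HasDerivAt f (deriv f x) x := by
  filter_upwards [hf.eventually (by simp)] with x hx
  exact (hx.differentiableAt one_ne_zero).hasDerivAt

theorem hasDerivAt_deriv_of_contDiffAt_two (hf : ContDiffAt 𝕜 2 f a) :
    HasDerivAt (deriv f) (iteratedDeriv 2 f a) a := by
  rw [iteratedDeriv_succ, iteratedDeriv_one]
  have hf' : ContDiffAt 𝕜 1 (deriv f) a := hf.derivWithin one_add_one_eq_two.le
  exact (hf'.differentiableAt one_ne_zero).hasDerivAt

theorem iteratedDeriv_two_eq (hf : ∀ᶠ x in 𝓝 a, HasDerivAt f (f' x) x)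
    (hf' : HasDerivAt f' f'' a) : iteratedDeriv 2 f a = f'' := by
  have deriv_eq : deriv f =ᶠ[𝓝 a] f' := hf.mono fun _ hx ↦ hx.deriv
  rw [iteratedDeriv_succ, iteratedDeriv_one, deriv_eq.deriv_eq, hf'.deriv]

end Calculus

section Levels

variable {ι : Type*} [Fintype ι] {f ψ p : ι → ℝ → ℝ} {a c : ℝ}

theorem eventually_sum_mul_deriv_eq_zero (hψ : ∀ i, ContDiffAt ℝ 1 (ψ i) a)
    (hc : ∀ᶠ x in 𝓝 a, ∑ i, ψ i x ^ 2 = c) :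
    ∀ᶠ x in 𝓝 a, ∑ i, ψ i x * deriv (ψ i) x = 0 := by
  have hψ' := Filter.eventually_all.2 fun i ↦ eventually_hasDerivAt_of_contDiffAt_one (hψ i)
  filter_upwards [hψ', hc.eventually_nhds] with x hx hcx
  have sum_sq : HasDerivAt (fun y ↦ ∑ i, ψ i y ^ 2) (2 * ∑ i, ψ i x * deriv (ψ i) x) x :=
    (HasDerivAt.fun_sum fun i _ ↦ (hx i).fun_pow 2).congr_deriv <| by
      simp [Finset.mul_sum, mul_assoc]
  have const : HasDerivAt (fun y ↦ ∑ i, ψ i y ^ 2) 0 x :=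
    (hasDerivAt_const x c).congr_of_eventuallyEq hcx
  simpa using sum_sq.unique const

theorem eventually_hasDerivAt_sum_mul_amplitude (hf : ∀ i, ContDiffAt ℝ 1 (f i) a)
    (hψ : ∀ i, ContDiffAt ℝ 1 (ψ i) a) (hc : ∀ᶠ x in 𝓝 a, ∑ i, ψ i x ^ 2 = c) :
    ∀ᶠ x in 𝓝 a, HasDerivAt (fun x ↦ ∑ i, f i x * (ψ i a * ψ i x))
      (∑ i, (deriv (f i) x * (ψ i a * ψ i x) + (f i x * ψ i a - ψ i x) * deriv (ψ i) x)) x := by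
  have hf' := Filter.eventually_all.2 fun i ↦ eventually_hasDerivAt_of_contDiffAt_one (hf i)
  have hψ' := Filter.eventually_all.2 fun i ↦ eventually_hasDerivAt_of_contDiffAt_one (hψ i)
  filter_upwards [hf', hψ', eventually_sum_mul_deriv_eq_zero hψ hc] with x hfx hψx orthogonal
  refine (HasDerivAt.fun_sum fun i _ ↦
    (hfx i).fun_mul ((hψx i).const_mul (ψ i a))).congr_deriv ?_
  rw [← sub_eq_zero, ← Finset.sum_sub_distrib, ← orthogonal]
  exact Finset.sum_congr rfl fun i _ ↦ by ring

theorem iteratedDeriv_two_sum_mul_amplitude (hf : ∀ i, ContDiffAt ℝ 2 (f i) a)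
    (hf₀ : ∀ i, f i a = 1) (hf₁ : ∀ i, deriv (f i) a = 0)
    (hψ : ∀ i, ContDiffAt ℝ 1 (ψ i) a) (hc : ∀ᶠ x in 𝓝 a, ∑ i, ψ i x ^ 2 = c) :
    iteratedDeriv 2 (fun x ↦ ∑ i, f i x * (ψ i a * ψ i x)) a =
      ∑ i, (iteratedDeriv 2 (f i) a * ψ i a ^ 2 - deriv (ψ i) a ^ 2) := by
  have hf' i : ContDiffAt ℝ 1 (f i) a := (hf i).of_le (by norm_num)
  refine iteratedDeriv_two_eq (eventually_hasDerivAt_sum_mul_amplitude hf' hψ hc) <|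
    HasDerivAt.fun_sum fun i _ ↦ ?_
  have hfi : HasDerivAt (f i) 0 a := hf₁ i ▸ ((hf' i).differentiableAt one_ne_zero).hasDerivAt
  have hψi : HasDerivAt (ψ i) (deriv (ψ i) a) a :=
    ((hψ i).differentiableAt one_ne_zero).hasDerivAt
  have deriv_continuous : ContinuousAt (deriv (ψ i)) a :=
    ((hψ i).derivWithin (m := 0) (zero_add 1).le).continuousAt
  have overlap_part : HasDerivAt (fun x ↦ deriv (f i) x * (ψ i a * ψ i x))
      (iteratedDeriv 2 (f i) a * (ψ i a * ψ i a)) a :=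
    hasDerivAt_mul_of_eq_zero_of_continuousAt (hasDerivAt_deriv_of_contDiffAt_two (hf i)) (hf₁ i)
      (continuousAt_const.mul (hψ i).continuousAt)
  have amplitude_part : HasDerivAt (fun x ↦ (f i x * ψ i a - ψ i x) * deriv (ψ i) x)
      ((0 * ψ i a - deriv (ψ i) a) * deriv (ψ i) a) a :=
    hasDerivAt_mul_of_eq_zero_of_continuousAt ((hfi.mul_const _).fun_sub hψi) (by simp [hf₀ i])
      deriv_continuous
  exact (overlap_part.fun_add amplitude_part).congr_deriv (by ring)

/-- The fidelity between the states at parameters `a` and `x` of a system with level set `ι`, when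
level `i` has occupation probability `p i` and only states of the same level overlap, the overlap
of level `i` at `a` and `x` being `f i x`. The base point `a` is implicit in `f` but explicit in
the occupation amplitudes `√(p i)`. -/
noncomputable def levelFidelity (f p : ι → ℝ → ℝ) (a x : ℝ) : ℝ :=
  ∑ i, f i x * (√(p i a) * √(p i x))

theorem levelFidelity_self (hf₀ : ∀ i, f i a = 1) (hp₀ : ∀ i, 0 ≤ p i a) :
    levelFidelity f p a a = ∑ i, p i a := by
  simp [levelFidelity, hf₀, mul_self_sqrt, hp₀]

theorem iteratedDeriv_two_levelFidelity (hf : ∀ i, ContDiffAt ℝ 2 (f i) a)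
    (hf₀ : ∀ i, f i a = 1) (hf₁ : ∀ i, deriv (f i) a = 0)
    (hp : ∀ i, ContDiffAt ℝ 1 (p i) a) (hp₀ : ∀ i, 0 < p i a)
    (hc : ∀ᶠ x in 𝓝 a, ∑ i, p i x = c) :
    iteratedDeriv 2 (levelFidelity f p a) a =
      ∑ i, iteratedDeriv 2 (f i) a * p i a - (∑ i, deriv (p i) a ^ 2 / p i a) / 4 := by
  have pos : ∀ᶠ x in 𝓝 a, ∀ i, 0 < p i x :=
    Filter.eventually_all.2 fun i ↦ (hp i).continuousAt.eventually_const_lt (hp₀ i)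
  have sum_sq : ∀ᶠ x in 𝓝 a, ∑ i, √(p i x) ^ 2 = c := by
    filter_upwards [pos, hc] with x hx hcx
    simp [sq_sqrt, (hx _).le, hcx]
  have deriv_amplitude i : deriv (fun x ↦ √(p i x)) a ^ 2 = deriv (p i) a ^ 2 / p i a / 4 := by
    rw [deriv_sqrt ((hp i).differentiableAt one_ne_zero) (hp₀ i).ne', div_pow, mul_pow,
      sq_sqrt (hp₀ i).le]
    ring
  refine (iteratedDeriv_two_sum_mul_amplitude hf hf₀ hf₁
    (fun i ↦ (hp i).sqrt (hp₀ i).ne') sum_sq).trans ?_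
  simp only [sq_sqrt, (hp₀ _).le, deriv_amplitude, Finset.sum_sub_distrib, Finset.sum_div]

end Levels

section TwoLevels

/-- The Boltzmann occupation probabilities `1 / (1 + e^{-u})` and `1 / (1 + e^{u})` of the lower
and the upper level of a two-level system, where `u δ` is the gap at parameter `δ` times the
inverse temperature. -/
noncomputable def gibbsWeight (u : ℝ → ℝ) : Fin 2 → ℝ → ℝ :=
  ![fun δ ↦ sigmoid (u δ), fun δ ↦ sigmoid (-u δ)]

variable {u : ℝ → ℝ} {a : ℝ}

theorem gibbsWeight_pos (u : ℝ → ℝ) (i : Fin 2) (δ : ℝ) : 0 < gibbsWeight u i δ := by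
  fin_cases i <;> exact sigmoid_pos _

theorem sum_gibbsWeight (u : ℝ → ℝ) (δ : ℝ) : ∑ i, gibbsWeight u i δ = 1 := by
  simp [gibbsWeight, sigmoid_neg]

theorem contDiffAt_gibbsWeight (hu : ContDiffAt ℝ 1 u a) (i : Fin 2) :
    ContDiffAt ℝ 1 (gibbsWeight u i) a := by
  have hσ : ContDiff ℝ 1 sigmoid := contDiff_sigmoid.of_le le_top
  fin_cases i
  · exact hσ.contDiffAt.comp a hu
  · exact hσ.contDiffAt.comp a hu.neg

theorem sum_sq_deriv_gibbsWeight_div (hu : DifferentiableAt ℝ u a) :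
    ∑ i, deriv (gibbsWeight u i) a ^ 2 / gibbsWeight u i a =
      deriv u a ^ 2 * (sigmoid (u a) * sigmoid (-u a)) := by
  have deriv_lower : deriv (fun δ ↦ sigmoid (u δ)) a =
      sigmoid (u a) * (1 - sigmoid (u a)) * deriv u a :=
    ((hasDerivAt_sigmoid _).comp a hu.hasDerivAt).deriv
  have deriv_upper : deriv (fun δ ↦ sigmoid (-u δ)) a =
      sigmoid (-u a) * (1 - sigmoid (-u a)) * -deriv u a :=
    ((hasDerivAt_sigmoid _).comp a hu.hasDerivAt.fun_neg).deriv
  have lower_ne := (sigmoid_pos (u a)).ne'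
  have upper_ne := (sigmoid_pos (-u a)).ne'
  simp only [gibbsWeight, Fin.sum_univ_two, Matrix.cons_val_zero, Matrix.cons_val_one,
    deriv_lower, deriv_upper]
  field_simp [lower_ne, upper_ne]
  rw [sigmoid_neg]
  ring

theorem sigmoid_mul_sigmoid_neg_div_four (t : ℝ) :
    sigmoid t * sigmoid (-t) / 4 =
      exp t / (2 * (exp t + 1) ^ 2) - 3 * exp t / (4 * (exp t + 1) ^ 3) +
        exp (-t) / (2 * (exp (-t) + 1) ^ 2) - 3 * exp (-t) / (4 * (exp (-t) + 1) ^ 3) := by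
  simp only [sigmoid_def, neg_neg, exp_neg]
  have := exp_pos t
  field_simp
  ring

theorem levelFidelity_gibbsWeight (f : Fin 2 → ℝ → ℝ) (u : ℝ → ℝ) (a x : ℝ) :
    levelFidelity f (gibbsWeight u) a x =
      f 0 x / (√(1 + exp (-u a)) * √(1 + exp (-u x))) +
        f 1 x / (√(1 + exp (u a)) * √(1 + exp (u x))) := by
  simp [levelFidelity, gibbsWeight, sigmoid_def, div_eq_mul_inv, mul_comm]

theorem iteratedDeriv_two_levelFidelity_gibbsWeight {f : Fin 2 → ℝ → ℝ}
    (hf : ∀ i, ContDiffAt ℝ 2 (f i) a) (hf₀ : ∀ i, f i a = 1) (hf₁ : ∀ i, deriv (f i) a = 0)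
    (hu : ContDiffAt ℝ 1 u a) :
    iteratedDeriv 2 (levelFidelity f (gibbsWeight u) a) a =
      iteratedDeriv 2 (f 0) a * sigmoid (u a) + iteratedDeriv 2 (f 1) a * sigmoid (-u a) -
        deriv u a ^ 2 * (sigmoid (u a) * sigmoid (-u a) / 4) := by
  rw [iteratedDeriv_two_levelFidelity hf hf₀ hf₁ (contDiffAt_gibbsWeight hu)
      (gibbsWeight_pos u · a) (.of_forall (sum_gibbsWeight u)),
    sum_sq_deriv_gibbsWeight_div (hu.differentiableAt one_ne_zero), Fin.sum_univ_two, mul_div_assoc]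
  rfl

end TwoLevels

theorem tla_fidelity_second_derivative_general (β Δ χp χm : ℝ)
    (F0p F0m Δfun : ℝ → ℝ)
    (hF0p : ContDiffAt ℝ 2 F0p 0) (hF0m : ContDiffAt ℝ 2 F0m 0)
    (hΔfun : ContDiffAt ℝ 1 Δfun 0)
    (hF0p0 : F0p 0 = 1) (hF0m0 : F0m 0 = 1)
    (hF0p1 : deriv F0p 0 = 0) (hF0m1 : deriv F0m 0 = 0)
    (hF0p2 : iteratedDeriv 2 F0p 0 = -χp) (hF0m2 : iteratedDeriv 2 F0m 0 = -χm)
    (hΔ0 : Δfun 0 = Δ) :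
    let F : ℝ → ℝ := fun δ =>
      F0p δ / (Real.sqrt (1 + Real.exp (-β * Δ)) * Real.sqrt (1 + Real.exp (-β * Δfun δ))) +
      F0m δ / (Real.sqrt (1 + Real.exp (β * Δ)) * Real.sqrt (1 + Real.exp (β * Δfun δ)))
    F 0 = 1 ∧
    -(iteratedDeriv 2 F 0) =
      χp / (1 + Real.exp (-β * Δ)) + χm / (1 + Real.exp (β * Δ)) +
      β ^ 2 * (deriv Δfun 0) ^ 2 *
        (Real.exp (β * Δ) / (2 * (Real.exp (β * Δ) + 1) ^ 2) -
         3 * Real.exp (β * Δ) / (4 * (Real.exp (β * Δ) + 1) ^ 3) +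
         Real.exp (-β * Δ) / (2 * (Real.exp (-β * Δ) + 1) ^ 2) -
         3 * Real.exp (-β * Δ) / (4 * (Real.exp (-β * Δ) + 1) ^ 3)) := by
  intro F
  have F_eq : F = levelFidelity ![F0p, F0m] (gibbsWeight fun δ ↦ β * Δfun δ) 0 := by
    ext δ
    simp [F, levelFidelity_gibbsWeight, hΔ0]
  have overlap_zero : ∀ i, ![F0p, F0m] i 0 = 1 := Fin.forall_fin_two.2 ⟨hF0p0, hF0m0⟩
  have gap_deriv : deriv (fun δ ↦ β * Δfun δ) 0 = β * deriv Δfun 0 :=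
    deriv_const_mul β (hΔfun.differentiableAt one_ne_zero)
  rw [F_eq]
  constructor
  · rw [levelFidelity_self overlap_zero fun i ↦ (gibbsWeight_pos _ i 0).le, sum_gibbsWeight]
  · rw [iteratedDeriv_two_levelFidelity_gibbsWeight (Fin.forall_fin_two.2 ⟨hF0p, hF0m⟩)
      overlap_zero (Fin.forall_fin_two.2 ⟨hF0p1, hF0m1⟩) (contDiffAt_const.mul hΔfun), gap_deriv]
    simp only [Matrix.cons_val_zero, Matrix.cons_val_one, hF0p2, hF0m2, hΔ0, neg_mul β Δ,
      ← sigmoid_mul_sigmoid_neg_div_four]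
    simp only [sigmoid_def, neg_neg]
    ring

/-- Two-level approximation of the fidelity between neighboring thermal states:
with sector ground-state overlaps `F₀⁺, F₀⁻` (second derivative `−χ₀±` at `0`, value `1`,
first derivative `0`) and a differentiable gap function `Δ(δ)` with `Δ(0) = Δ`, the function
`F(δ) = F₀⁺(δ)/[√(1+e^{-βΔ})√(1+e^{-βΔ(δ)})] + F₀⁻(δ)/[√(1+e^{βΔ})√(1+e^{βΔ(δ)})]`
satisfies `F(0) = 1` and
`−F''(0) = χ₀⁺/(1+e^{-βΔ}) + χ₀⁻/(1+e^{βΔ}) + R` with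
`R = β²Δ'(0)² [e^{βΔ}/(2(e^{βΔ}+1)²) − 3e^{βΔ}/(4(e^{βΔ}+1)³)
  + e^{-βΔ}/(2(e^{-βΔ}+1)²) − 3e^{-βΔ}/(4(e^{-βΔ}+1)³)]`. -/
theorem tla_fidelity_second_derivative (β Δ χp χm : ℝ) (hβ : 0 < β) (hΔ : 0 < Δ)
    (F0p F0m Δfun : ℝ → ℝ)
    (hF0p : ContDiffAt ℝ 2 F0p 0) (hF0m : ContDiffAt ℝ 2 F0m 0)
    (hΔfun : ContDiffAt ℝ 2 Δfun 0)
    (hF0p0 : F0p 0 = 1) (hF0m0 : F0m 0 = 1)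
    (hF0p1 : deriv F0p 0 = 0) (hF0m1 : deriv F0m 0 = 0)
    (hF0p2 : iteratedDeriv 2 F0p 0 = -χp) (hF0m2 : iteratedDeriv 2 F0m 0 = -χm)
    (hΔ0 : Δfun 0 = Δ) :
    let F : ℝ → ℝ := fun δ =>
      F0p δ / (Real.sqrt (1 + Real.exp (-β * Δ)) * Real.sqrt (1 + Real.exp (-β * Δfun δ))) +
      F0m δ / (Real.sqrt (1 + Real.exp (β * Δ)) * Real.sqrt (1 + Real.exp (β * Δfun δ)))
    F 0 = 1 ∧
    -(iteratedDeriv 2 F 0) =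
      χp / (1 + Real.exp (-β * Δ)) + χm / (1 + Real.exp (β * Δ)) +
      β ^ 2 * (deriv Δfun 0) ^ 2 *
        (Real.exp (β * Δ) / (2 * (Real.exp (β * Δ) + 1) ^ 2) -
         3 * Real.exp (β * Δ) / (4 * (Real.exp (β * Δ) + 1) ^ 3) +
         Real.exp (-β * Δ) / (2 * (Real.exp (-β * Δ) + 1) ^ 2) -
         3 * Real.exp (-β * Δ) / (4 * (Real.exp (-β * Δ) + 1) ^ 3)) :=
  tla_fidelity_second_derivative_general β Δ χp χm F0p F0m Δfun hF0p hF0m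
    (hΔfun.of_le (by norm_num)) hF0p0 hF0m0 hF0p1 hF0m1 hF0p2 hF0m2 hΔ0
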